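/- There exist universal constants c > 0 and C > 0 such that for every projection game G, every ε ∈ (0,1) with val(G) ≤ 1 − ε, and every positive integer k with k ≤ c/ε², one has val(G^{⊗k}) ≤ 1 − C·√k·ε. -/

import Mathlib

open Finset

/-- A projection game: finite nonempty question sets `Q1` (Alice) and `Q2` (Bob),
a finite nonempty alphabet `A`, and a probability mass function `μ` on triples
`(u, v, π)` where `π : A → Option A` encodes a projection constraint
(the answer pair `(α, β)` satisfies `π` iff `π β = some α`). -/
structure ProjGame where
  Q1 : Type
  Q2 : Type
  A : Type
  [fQ1 : Fintype Q1]
  [fQ2 : Fintype Q2]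
  [fA : Fintype A]
  [neQ1 : Nonempty Q1]
  [neQ2 : Nonempty Q2]
  [neA : Nonempty A]
  [dQ1 : DecidableEq Q1]
  [dQ2 : DecidableEq Q2]
  [dA : DecidableEq A]
  μ : Q1 × Q2 × (A → Option A) → ℝ
  μ_nonneg : ∀ x, 0 ≤ μ x
  μ_sum : ∑ x, μ x = 1

attribute [instance] ProjGame.fQ1 ProjGame.fQ2 ProjGame.fA
  ProjGame.neQ1 ProjGame.neQ2 ProjGame.neA ProjGame.dQ1 ProjGame.dQ2 ProjGame.dA

namespace ProjGame

variable (G : ProjGame)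

/-- The `U`-marginal (Alice-side marginal) of `μ`. -/
noncomputable def wU (u : G.Q1) : ℝ := ∑ v, ∑ π, G.μ (u, v, π)

/-- The `V`-marginal (Bob-side marginal) of `μ`. -/
noncomputable def wV (v : G.Q2) : ℝ := ∑ u, ∑ π, G.μ (u, v, π)

/-- The game operator: `(Gf)(u,α) = E_{(v,π)|u} [∑_{β : π β = some α} f (v,β)]`. -/
noncomputable def op (f : G.Q2 × G.A → ℝ) : G.Q1 × G.A → ℝ :=
  fun p =>
    (∑ v, ∑ π, G.μ (p.1, v, π) * ∑ β, if π β = some p.2 then f (v, β) else 0) / G.wU p.1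

/-- Squared norm on functions on `U × Σ`: `‖g‖² = E_u [∑_α g(u,α)²]`. -/
noncomputable def normUsq (g : G.Q1 × G.A → ℝ) : ℝ := ∑ u, G.wU u * ∑ α, (g (u, α)) ^ 2

/-- Squared norm on functions on `V × Σ`: `‖f‖² = E_v [∑_β f(v,β)²]`. -/
noncomputable def normVsq (f : G.Q2 × G.A → ℝ) : ℝ := ∑ v, G.wV v * ∑ β, (f (v, β)) ^ 2

/-- Inner product `⟨g, g'⟩ = E_u [∑_α g(u,α) g'(u,α)]`. -/
noncomputable def inn (g g' : G.Q1 × G.A → ℝ) : ℝ :=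
  ∑ u, G.wU u * ∑ α, g (u, α) * g' (u, α)

/-- An assignment for Bob. -/
def IsBob (f : G.Q2 × G.A → ℝ) : Prop := (∀ p, 0 ≤ f p) ∧ ∀ v, ∑ β, f (v, β) = 1

/-- An assignment for Alice. -/
def IsAlice (g : G.Q1 × G.A → ℝ) : Prop := (∀ p, 0 ≤ g p) ∧ ∀ u, ∑ α, g (u, α) = 1

/-- The value of the game: `val(G) = max ⟨g, Gf⟩` over assignments. -/
noncomputable def val : ℝ :=
  sSup { x | ∃ f g, G.IsBob f ∧ G.IsAlice g ∧ x = G.inn g (G.op f) }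

/-- The collision value `‖G‖ = max_f ‖Gf‖` over assignments `f` for Bob. -/
noncomputable def collVal : ℝ :=
  sSup { x | ∃ f, G.IsBob f ∧ x = Real.sqrt (G.normUsq (G.op f)) }

/-- Product of projection constraints. -/
def tensorC {A A' : Type} (π : A → Option A) (π' : A' → Option A') :
    A × A' → Option (A × A') :=
  fun b => (π b.1).bind fun a => (π' b.2).map fun a' => (a, a')

/-- The product (parallel repetition) of two projection games. -/
noncomputable def tensor (G H : ProjGame) : ProjGame where
  Q1 := G.Q1 × H.Q1
  Q2 := G.Q2 × H.Q2
  A := G.A × H.A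
  μ := fun x =>
    ∑ y : (G.Q1 × G.Q2 × (G.A → Option G.A)) × (H.Q1 × H.Q2 × (H.A → Option H.A)),
      if ((y.1.1, y.2.1), (y.1.2.1, y.2.2.1), tensorC y.1.2.2 y.2.2.2) = x
      then G.μ y.1 * H.μ y.2 else 0
  μ_nonneg := by
    intro x
    refine Finset.sum_nonneg fun y _ => ?_
    split
    · exact mul_nonneg (G.μ_nonneg _) (H.μ_nonneg _)
    · exact le_refl 0
  μ_sum := by
    rw [Finset.sum_comm]
    simp only [Finset.sum_ite_eq, Finset.mem_univ, if_true]
    rw [Fintype.sum_prod_type]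
    calc (∑ y1, ∑ y2, G.μ y1 * H.μ y2)
        = (∑ y1, G.μ y1) * (∑ y2, H.μ y2) := by rw [Finset.sum_mul_sum]
      _ = 1 := by rw [G.μ_sum, H.μ_sum, mul_one]

/-- `G.iterTensor k` is the `(k+1)`-fold parallel repetition `G^{⊗(k+1)}`. -/
noncomputable def iterTensor (G : ProjGame) : ℕ → ProjGame
  | 0 => G
  | n + 1 => G.tensor (G.iterTensor n)

/-- `val₊(G)`: supremum of values of vector assignments. -/
noncomputable def valPlus (G : ProjGame) : ℝ :=
  sSup { x | ∃ n : ℕ, 0 < n ∧ ∃ f : G.Q2 × G.A → Fin n → ℝ,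
    (∀ p i, 0 ≤ f p i) ∧
    (∀ v, Real.sqrt (∑ i, (∑ β, f (v, β) i) ^ 2) ≤ 1) ∧
    x = Real.sqrt (∑ u, G.wU u * ∑ α, ∑ i, (G.op (fun q => f q i) (u, α)) ^ 2) }

/-- `‖Th‖² = E_v [(∑_β h(v,β))²]`. -/
noncomputable def Tnormsq (G : ProjGame) (h : G.Q2 × G.A → ℝ) : ℝ :=
  ∑ v, G.wV v * (∑ β, h (v, β)) ^ 2

/-- `λ₊(G)`: supremum of `‖Gh‖/‖Th‖` over nonnegative `h` with `‖Th‖ > 0`. -/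
noncomputable def lambdaPlus (G : ProjGame) : ℝ :=
  sSup { x | ∃ h : G.Q2 × G.A → ℝ, (∀ p, 0 ≤ h p) ∧
    0 < Real.sqrt (G.Tnormsq h) ∧
    x = Real.sqrt (G.normUsq (G.op h)) / Real.sqrt (G.Tnormsq h) }

/-- The symmetrized distribution on `V × V` (with the constraints marginalized out). -/
noncomputable def msym (G : ProjGame) (v v' : G.Q2) : ℝ :=
  ∑ u, ((∑ π, G.μ (u, v, π)) * (∑ π', G.μ (u, v', π'))) / G.wU u

/-- `G` is `γ`-expanding: the Markov operator of the symmetrized constraint graph has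
spectral gap at least `γ`, i.e. `|⟨x, Ax⟩| ≤ (1-γ) E_v[x(v)²]` for mean-zero `x`. -/
def IsExpanding (G : ProjGame) (γ : ℝ) : Prop :=
  ∀ x : G.Q2 → ℝ, (∑ v, G.wV v * x v) = 0 →
    |∑ v, ∑ v', G.msym v v' * x v * x v'| ≤ (1 - γ) * ∑ v, G.wV v * (x v) ^ 2

/-- The symmetrized distribution on `(v, v', π, π')`. -/
noncomputable def msymFull (G : ProjGame) (v v' : G.Q2) (π π' : G.A → Option G.A) : ℝ :=
  ∑ u, (G.μ (u, v, π) * G.μ (u, v', π')) / G.wU u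

/-- The value of the assignment `x` in the symmetrized game `G_sym`. -/
noncomputable def symValAssign (G : ProjGame) (x : G.Q2 → G.A) : ℝ :=
  ∑ v, ∑ v', ∑ π, ∑ π', G.msymFull v v' π π' *
    (if ∃ α, π (x v) = some α ∧ π' (x v') = some α then 1 else 0)

/-- The value of the symmetrized game `G_sym`. -/
noncomputable def symVal (G : ProjGame) : ℝ :=
  sSup { r | ∃ x : G.Q2 → G.A, r = G.symValAssign x }

end ProjGame

/-!
The argument measures a game by the loss `1 - ‖G‖²`, where `‖G‖ = max ‖Gf‖` over assignments `f`
for Bob; this is `1 - val G` up to a factor of two. It iterates a gain in a single product: if `e`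
and `δ` are the losses of `G` and `G ⊗ H`, and `δ' ≤ 1/8` is at most the loss of `H`, then
`δ ^ 2 ≥ δ' ^ 2 + (e / 1000) ^ 2`.

Let `f` be optimal for `G ⊗ H`. Given Alice's question in `H`, her answers `j` there index a family
of functions `h j` on Bob's side of `G`, whose masses at each question sum to at most one. Averaged
over Alice's question, `∑ j, (‖T (h j)‖² - ‖G (h j)‖²)` is at most `δ - δ'`, so that the masses and
the projected answers of the `h j` hardly change between two questions to Bob with the same `u`.
Round the family to an assignment for `G`: choose a level `t` in `[2/3, 3/4)`, play the `h j` whose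
mass exceeds `t`, and an optimal assignment for `G` where there is none. A random level separates
masses `a < b` with probability of order `b - a`, and by AM-GM `b - a ≲ κ (b - a)² + κ⁻¹ (b - b²)`;
the first terms add up to at most `δ - δ'`, the second ones to at most `δ`. The rounded assignment
has loss at least `e`, hence `e ≲ (1 + κ) (δ - δ') + κ⁻¹ δ` for all `κ > 0`. Choosing `κ` gives
`e ^ 2 ≲ δ (δ - δ') ≤ δ ^ 2 - δ' ^ 2`.
-/

namespace ProjGame

open MeasureTheory in
lemma exists_sum_mul_indicator_le {α K : Type*} [MeasurableSpace α] [Fintype K] (ν : Measure α)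
    {S : Set α} (hS₀ : ν S ≠ 0) (hS : ν S ≠ ⊤) (w : K → ℝ) {E : K → Set α}
    (hE : ∀ k, MeasurableSet (E k)) :
    ∃ t ∈ S, ∑ k, w k * (E k).indicator 1 t ≤ (ν.real S)⁻¹ * ∑ k, w k * ν.real (E k ∩ S) := by
  have : IsFiniteMeasure (ν.restrict S) := ⟨by simpa using hS.lt_top⟩
  have hint (k : K) : IntegrableOn (fun t ↦ w k * (E k).indicator 1 t) S ν :=
    ((integrable_const (1 : ℝ)).indicator (hE k)).const_mul (w k)
  obtain ⟨t, htS, ht⟩ := exists_le_setAverage hS₀ hS (integrable_finsetSum univ fun k _ ↦ hint k)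
  refine ⟨t, htS, ht.trans_eq ?_⟩
  rw [setAverage_eq, smul_eq_mul, integral_finsetSum _ fun k _ ↦ hint k]
  congr! 2 with k
  rw [integral_const_mul, integral_indicator_one (hE k), measureReal_restrict_apply (hE k)]

lemma sum_mul_le_sum_mul_sum {ι : Type*} [Fintype ι] {a b : ι → ℝ} (ha : ∀ i, 0 ≤ a i)
    (hb : ∀ i, 0 ≤ b i) : ∑ i, a i * b i ≤ (∑ i, a i) * ∑ i, b i := by
  rw [sum_mul]
  exact sum_le_sum fun i _ ↦
    mul_le_mul_of_nonneg_left (single_le_sum (fun j _ ↦ hb j) (mem_univ i)) (ha i)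

lemma sum_mul_le_one {ι : Type*} [Fintype ι] {a b : ι → ℝ} (ha : ∀ i, 0 ≤ a i)
    (hb : ∀ i, 0 ≤ b i) (ha₁ : ∑ i, a i ≤ 1) (hb₁ : ∑ i, b i ≤ 1) : ∑ i, a i * b i ≤ 1 :=
  (sum_mul_le_sum_mul_sum ha hb).trans (mul_le_one₀ ha₁ (sum_nonneg fun i _ ↦ hb i) hb₁)

section Crossing

/-- The levels `t` separating `a` from `b`, where only the values `b < 5/6` count: larger values
are a constant away from every level below `3/4`, so that `discrepancy` handles them. -/
def crossing (a b : ℝ) : Set ℝ := {t | a ≤ t ∧ t < b ∧ b < 5 / 6}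

lemma crossing_eq (a b : ℝ) : crossing a b = if b < 5 / 6 then Set.Ico a b else ∅ := by
  ext t
  by_cases hb : b < 5 / 6 <;> simp [crossing, hb]

lemma measurableSet_crossing (a b : ℝ) : MeasurableSet (crossing a b) := by
  rw [crossing_eq]
  split_ifs
  exacts [measurableSet_Ico, .empty]

lemma indicator_crossing_nonneg (a b t : ℝ) : 0 ≤ (crossing a b).indicator (1 : ℝ → ℝ) t :=
  Set.indicator_nonneg (fun _ _ ↦ zero_le_one) t

open MeasureTheory in
lemma volume_crossing_le {a b κ : ℝ} (hκ : 0 < κ) (hb₀ : 0 ≤ b) (hb₁ : b ≤ 1) :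
    volume.real (crossing a b ∩ Set.Ico (2 / 3) (3 / 4)) ≤
      κ * ((b - a) ^ 2 / 2) + 4 / κ * (b - b ^ 2) := by
  have hnonneg : 0 ≤ κ * ((b - a) ^ 2 / 2) + 4 / κ * (b - b ^ 2) := by
    have : 0 ≤ b - b ^ 2 := by nlinarith
    positivity
  obtain hempty | ⟨t, ⟨hat, htb, hb⟩, ht, -⟩ :=
    (crossing a b ∩ Set.Ico (2 / 3) (3 / 4)).eq_empty_or_nonempty
  · simpa [hempty] using hnonneg
  have hvol : volume.real (crossing a b ∩ Set.Ico (2 / 3) (3 / 4)) ≤ b - a := by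
    rw [← Real.volume_real_Ico_of_le (hat.trans htb.le)]
    exact measureReal_mono (fun s hs ↦ ⟨hs.1.1, hs.1.2.1⟩) (by simp)
  have hamgm : b - a ≤ κ * ((b - a) ^ 2 / 2) + 1 / (2 * κ) := by
    have : κ * ((b - a) ^ 2 / 2) + 1 / (2 * κ) - (b - a) = (κ * (b - a) - 1) ^ 2 / (2 * κ) := by
      field_simp
      ring
    linarith [show 0 ≤ (κ * (b - a) - 1) ^ 2 / (2 * κ) by positivity]
  have hvar : 1 / (2 * κ) ≤ 4 / κ * (b - b ^ 2) := by
    have : 1 / 8 ≤ b - b ^ 2 := by nlinarith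
    rw [div_mul_eq_mul_div, div_le_div_iff₀ (by positivity) hκ]
    nlinarith
  linarith

end Crossing

section Constraints

variable {V A B J : Type*} [Fintype A]

/-- The total weight that `f` puts on answers to the question `v`; it is `1` for an assignment. -/
def mass (f : V × A → ℝ) (v : V) : ℝ := ∑ β, f (v, β)

lemma mass_nonneg {f : V × A → ℝ} (hf : 0 ≤ f) (v : V) : 0 ≤ mass f v :=
  sum_nonneg fun _ _ ↦ hf _

/-- The weights on answers to `c.1` pushed forward along the constraint `c.2`. -/
def push [DecidableEq B] (f : V × A → ℝ) (c : V × (A → Option B)) (α : B) : ℝ :=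
  ∑ β, if c.2 β = some α then f (c.1, β) else 0

/-- The weight with which two independent answers, drawn according to `f` and projected along the
constraints `c` and `c'`, agree. -/
def agree [Fintype B] [DecidableEq B] (f : V × A → ℝ) (c c' : V × (A → Option B)) : ℝ :=
  ∑ α, push f c α * push f c' α

lemma agree_comm [Fintype B] [DecidableEq B] (f : V × A → ℝ) (c c' : V × (A → Option B)) :
    agree f c c' = agree f c' c := by
  simp only [agree, mul_comm]

/-- The local contribution of `(c, c')` to `‖Tf‖² - ‖Gf‖²`. -/
noncomputable def discrepancy [Fintype B] [DecidableEq B] (f : V × A → ℝ)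
    (c c' : V × (A → Option B)) : ℝ :=
  (mass f c.1 ^ 2 + mass f c'.1 ^ 2) / 2 - agree f c c'

section Push

variable [DecidableEq B] {f : V × A → ℝ}

lemma push_nonneg (hf : 0 ≤ f) (c : V × (A → Option B)) (α : B) : 0 ≤ push f c α :=
  sum_nonneg fun β _ ↦ by split_ifs; exacts [hf _, le_rfl]

lemma sum_push_le_mass [Fintype B] (hf : 0 ≤ f) (c : V × (A → Option B)) :
    ∑ α, push f c α ≤ mass f c.1 := by
  simp only [push, mass]
  rw [sum_comm]
  refine sum_le_sum fun β _ ↦ ?_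
  cases hβ : c.2 β with
  | none => simpa using hf _
  | some a => simp

lemma push_sum_mul_div {K : Type*} [Fintype K] (w : K → ℝ) (d : ℝ) (F : K → V × A → ℝ)
    (c : V × (A → Option B)) (α : B) :
    push (fun p ↦ (∑ k, w k * F k p) / d) c α = (∑ k, w k * push (F k) c α) / d := by
  simp only [push, mul_sum]
  rw [sum_comm, sum_div]
  refine sum_congr rfl fun β _ ↦ ?_
  split_ifs <;> simp

end Push

section Rounding

variable {h : J → V × A → ℝ} {fs : V × A → ℝ} {t : ℝ}

open Classical in
/-- Where some `h j` has mass above the level `t` (for `t ≥ 1/2` there is at most one such `j`),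
play this `h j`, normalised; elsewhere fall back to `fs`. -/
noncomputable def thresholdRound (h : J → V × A → ℝ) (fs : V × A → ℝ) (t : ℝ) : V × A → ℝ :=
  fun p ↦ if hj : ∃ j, t < mass (h j) p.1 then h hj.choose p / mass (h hj.choose) p.1 else fs p

lemma thresholdRound_nonneg (hh : ∀ j, 0 ≤ h j) (hfs : 0 ≤ fs) : 0 ≤ thresholdRound h fs t := by
  intro p
  simp only [thresholdRound]
  split_ifs
  exacts [div_nonneg (hh _ _) (mass_nonneg (hh _) _), hfs p]

lemma mass_thresholdRound (ht : 0 ≤ t) {v : V} (hfs : mass fs v = 1) :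
    mass (thresholdRound h fs t) v = 1 := by
  by_cases hj : ∃ j, t < mass (h j) v
  · rw [mass]
    simp only [thresholdRound, dif_pos hj]
    rw [← sum_div]
    exact div_self (ht.trans_lt hj.choose_spec).ne'
  · rw [← hfs, mass, mass]
    simp only [thresholdRound, dif_neg hj]

lemma push_thresholdRound_of_heavy [DecidableEq B] {c : V × (A → Option B)}
    (hc : ∃ j, t < mass (h j) c.1) :
    ∃ j, t < mass (h j) c.1 ∧
      push (thresholdRound h fs t) c = fun α ↦ push (h j) c α / mass (h j) c.1 := by
  refine ⟨hc.choose, hc.choose_spec, funext fun α ↦ ?_⟩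
  simp only [push, thresholdRound, dif_pos hc, sum_div, ite_div, zero_div]

lemma push_thresholdRound_of_light [DecidableEq B] {c : V × (A → Option B)}
    (hc : ∀ j, mass (h j) c.1 ≤ t) :
    push (thresholdRound h fs t) c = push fs c := by
  have hc' : ¬∃ j, t < mass (h j) c.1 := by simpa using hc
  funext α
  simp only [push, thresholdRound, dif_neg hc']

lemma agree_thresholdRound_of_light [Fintype B] [DecidableEq B] {c c' : V × (A → Option B)}
    (hc : ∀ j, mass (h j) c.1 ≤ t) (hc' : ∀ j, mass (h j) c'.1 ≤ t) :
    agree (thresholdRound h fs t) c c' = agree fs c c' := by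
  simp only [agree, push_thresholdRound_of_light hc, push_thresholdRound_of_light hc']

end Rounding

variable [Fintype B] [DecidableEq B] {f : V × A → ℝ}

lemma agree_nonneg (hf : 0 ≤ f) (c c' : V × (A → Option B)) : 0 ≤ agree f c c' :=
  sum_nonneg fun _ _ ↦ mul_nonneg (push_nonneg hf _ _) (push_nonneg hf _ _)

lemma agree_le_mass_mul_mass (hf : 0 ≤ f) (c c' : V × (A → Option B)) :
    agree f c c' ≤ mass f c.1 * mass f c'.1 :=
  (sum_mul_le_sum_mul_sum (push_nonneg hf c) (push_nonneg hf c')).trans <|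
    mul_le_mul (sum_push_le_mass hf c) (sum_push_le_mass hf c')
      (sum_nonneg fun _ _ ↦ push_nonneg hf _ _) (mass_nonneg hf _)

lemma agree_le_one (hf : 0 ≤ f) (hf₁ : ∀ v, mass f v = 1) (c c' : V × (A → Option B)) :
    agree f c c' ≤ 1 := by
  simpa only [hf₁, mul_one] using agree_le_mass_mul_mass hf c c'

lemma discrepancy_comm (f : V × A → ℝ) (c c' : V × (A → Option B)) :
    discrepancy f c c' = discrepancy f c' c := by
  rw [discrepancy, discrepancy, agree_comm, add_comm]

lemma discrepancy_eq (f : V × A → ℝ) (c c' : V × (A → Option B)) :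
    discrepancy f c c' =
      (mass f c.1 - mass f c'.1) ^ 2 / 2 + (mass f c.1 * mass f c'.1 - agree f c c') := by
  rw [discrepancy]; ring

lemma sq_mass_sub_mass_le_discrepancy (hf : 0 ≤ f) (c c' : V × (A → Option B)) :
    (mass f c.1 - mass f c'.1) ^ 2 / 2 ≤ discrepancy f c c' := by
  linarith [discrepancy_eq f c c', agree_le_mass_mul_mass hf c c']

lemma discrepancy_nonneg (hf : 0 ≤ f) (c c' : V × (A → Option B)) : 0 ≤ discrepancy f c c' :=
  (by positivity : 0 ≤ (mass f c.1 - mass f c'.1) ^ 2 / 2).trans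
    (sq_mass_sub_mass_le_discrepancy hf c c')

lemma one_le_discrepancy_of_gap (hf : 0 ≤ f) {c c' : V × (A → Option B)}
    (hgap : 1 / 12 ≤ mass f c.1 - mass f c'.1) : 1 ≤ 288 * discrepancy f c c' := by
  nlinarith [sq_mass_sub_mass_le_discrepancy hf c c']

lemma one_sub_agree_div_le_discrepancy {c c' : V × (A → Option B)} (hf : 0 ≤ f)
    (hc : 1 / 2 ≤ mass f c.1) (hc' : 1 / 2 ≤ mass f c'.1) :
    1 - agree f c c' / (mass f c.1 * mass f c'.1) ≤ 4 * discrepancy f c c' := by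
  have hprod : 1 / 4 ≤ mass f c.1 * mass f c'.1 := by nlinarith
  rw [one_sub_div (by linarith), div_le_iff₀ (by linarith)]
  nlinarith [discrepancy_eq f c c', sq_nonneg (mass f c.1 - mass f c'.1),
    discrepancy_nonneg hf c c']

lemma one_le_discrepancy_add_crossing (hf : 0 ≤ f) {c c' : V × (A → Option B)} {t : ℝ}
    (ht : t < 3 / 4) (hc : t < mass f c.1) (hc' : mass f c'.1 ≤ t) :
    1 ≤ 288 * discrepancy f c c' + (crossing (mass f c'.1) (mass f c.1)).indicator 1 t := by
  by_cases hb : mass f c.1 < 5 / 6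
  · rw [Set.indicator_of_mem (show t ∈ crossing _ _ from ⟨hc', hc, hb⟩), Pi.one_apply]
    linarith [discrepancy_nonneg hf c c']
  · linarith [one_le_discrepancy_of_gap (c := c) (c' := c') hf (by linarith),
      indicator_crossing_nonneg (mass f c'.1) (mass f c.1) t]

variable [Fintype J] {h : J → V × A → ℝ} {fs : V × A → ℝ} {t : ℝ}

/-- At every question `v`, `h` is a subprobability on pairs `(j, β)`. -/
def IsSubAssignment (h : J → V × A → ℝ) : Prop := (∀ j, 0 ≤ h j) ∧ ∀ v, ∑ j, mass (h j) v ≤ 1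

/-- The collision probability of `j` when `(j, β)` is drawn according to `h` at question `v`. -/
def collisionProb (h : J → V × A → ℝ) (v : V) : ℝ := ∑ j, mass (h j) v ^ 2

lemma IsSubAssignment.mass_le_one (hh : IsSubAssignment h) (j : J) (v : V) : mass (h j) v ≤ 1 :=
  (single_le_sum (fun i _ ↦ mass_nonneg (hh.1 i) v) (mem_univ j)).trans (hh.2 v)

lemma IsSubAssignment.sum_mass_sub_sq_le (hh : IsSubAssignment h) (v : V) :
    ∑ j, (mass (h j) v - mass (h j) v ^ 2) ≤ 1 - collisionProb h v := by
  rw [sum_sub_distrib, collisionProb]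
  linarith [hh.2 v]

lemma IsSubAssignment.collisionProb_le_one (hh : IsSubAssignment h) (v : V) :
    collisionProb h v ≤ 1 := by
  have : 0 ≤ ∑ j, (mass (h j) v - mass (h j) v ^ 2) := sum_nonneg fun j _ ↦ by
    nlinarith [mass_nonneg (hh.1 j) v, hh.mass_le_one j v]
  linarith [hh.sum_mass_sub_sq_le v]

lemma IsSubAssignment.collisionProb_le_of_mass_le (hh : IsSubAssignment h) {v : V} (ht : 0 ≤ t)
    (hlight : ∀ j, mass (h j) v ≤ t) : collisionProb h v ≤ t := by
  calc collisionProb h v ≤ ∑ j, t * mass (h j) v := sum_le_sum fun j _ ↦ by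
        nlinarith [hlight j, mass_nonneg (hh.1 j) v]
    _ = t * ∑ j, mass (h j) v := by rw [mul_sum]
    _ ≤ t := mul_le_of_le_one_right ht (hh.2 v)

lemma IsSubAssignment.one_le_discrepancy_of_ne (hh : IsSubAssignment h)
    {c c' : V × (A → Option B)} (ht : 2 / 3 ≤ t) {j j' : J} (hjj' : j ≠ j')
    (hj : t < mass (h j) c.1) (hj' : t < mass (h j') c'.1) : 1 ≤ 288 * discrepancy (h j) c c' := by
  classical
  have hpair : mass (h j) c'.1 + mass (h j') c'.1 ≤ 1 := by
    rw [← sum_pair (f := fun i ↦ mass (h i) c'.1) hjj']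
    exact (sum_le_sum_of_subset_of_nonneg (subset_univ _)
      fun i _ _ ↦ mass_nonneg (hh.1 i) _).trans (hh.2 _)
  exact one_le_discrepancy_of_gap (hh.1 j) (by linarith)

lemma IsSubAssignment.one_sub_agree_thresholdRound_le_of_heavy (hh : IsSubAssignment h)
    (hfs : 0 ≤ fs) (ht : 2 / 3 ≤ t) {c c' : V × (A → Option B)}
    (hc : ∃ j, t < mass (h j) c.1) (hc' : ∃ j, t < mass (h j) c'.1) :
    1 - agree (thresholdRound h fs t) c c' ≤ 288 * ∑ j, discrepancy (h j) c c' := by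
  have hpos := agree_nonneg (thresholdRound_nonneg (t := t) hh.1 hfs) c c'
  have hsum (j : J) : discrepancy (h j) c c' ≤ ∑ j, discrepancy (h j) c c' :=
    single_le_sum (fun i _ ↦ discrepancy_nonneg (hh.1 i) c c') (mem_univ j)
  obtain ⟨j, hj, hpush⟩ := push_thresholdRound_of_heavy (fs := fs) hc
  obtain ⟨j', hj', hpush'⟩ := push_thresholdRound_of_heavy (fs := fs) hc'
  rcases eq_or_ne j j' with rfl | hjj'
  · have hagree : agree (thresholdRound h fs t) c c' =
        agree (h j) c c' / (mass (h j) c.1 * mass (h j) c'.1) := by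
      simp only [agree, hpush, hpush', div_mul_div_comm, sum_div]
    have := one_sub_agree_div_le_discrepancy (c := c) (c' := c') (hh.1 j) (by linarith)
      (by linarith)
    linarith [hsum j, discrepancy_nonneg (hh.1 j) c c']
  · linarith [hh.one_le_discrepancy_of_ne ht hjj' hj hj', hsum j]

lemma IsSubAssignment.one_le_sum_discrepancy_add_crossing (hh : IsSubAssignment h)
    (ht : t < 3 / 4) {c c' : V × (A → Option B)} (hc : ∃ j, t < mass (h j) c.1)
    (hc' : ∀ j, mass (h j) c'.1 ≤ t) :
    1 ≤ 288 * ∑ j, discrepancy (h j) c c' +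
      ∑ j, (crossing (mass (h j) c'.1) (mass (h j) c.1)).indicator 1 t := by
  obtain ⟨j, hj⟩ := hc
  have hdisc : discrepancy (h j) c c' ≤ ∑ j, discrepancy (h j) c c' :=
    single_le_sum (fun i _ ↦ discrepancy_nonneg (hh.1 i) c c') (mem_univ j)
  have hcross : (crossing (mass (h j) c'.1) (mass (h j) c.1)).indicator (1 : ℝ → ℝ) t ≤
      ∑ j, (crossing (mass (h j) c'.1) (mass (h j) c.1)).indicator 1 t :=
    single_le_sum (fun i _ ↦ indicator_crossing_nonneg (mass (h i) c'.1) (mass (h i) c.1) t)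
      (mem_univ j)
  linarith [one_le_discrepancy_add_crossing (hh.1 j) ht hj (hc' j)]

/-- The crossing sums account for pairs where `t` separates the masses, and the last term for pairs
where all masses are below `t`: there the rounding plays `fs`, but the collision probability is
below `3/4`. -/
lemma IsSubAssignment.one_sub_agree_thresholdRound_le (hh : IsSubAssignment h) (hfs : 0 ≤ fs)
    (hfs₁ : ∀ v, mass fs v = 1) (ht : 2 / 3 ≤ t) (ht' : t < 3 / 4) (c c' : V × (A → Option B)) :
    1 - agree (thresholdRound h fs t) c c' ≤ 288 * ∑ j, discrepancy (h j) c c' +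
      (∑ j, (crossing (mass (h j) c'.1) (mass (h j) c.1)).indicator 1 t +
        ∑ j, (crossing (mass (h j) c.1) (mass (h j) c'.1)).indicator 1 t) +
      4 * ((1 - collisionProb h c.1) * (1 - agree fs c c')) := by
  have hround := agree_nonneg (thresholdRound_nonneg (t := t) hh.1 hfs) c c'
  have hdisc : 0 ≤ ∑ j, discrepancy (h j) c c' :=
    sum_nonneg fun j _ ↦ discrepancy_nonneg (hh.1 j) c c'
  have hcross (d d' : V × (A → Option B)) :
      0 ≤ ∑ j, (crossing (mass (h j) d.1) (mass (h j) d'.1)).indicator (1 : ℝ → ℝ) t :=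
    sum_nonneg fun j _ ↦ indicator_crossing_nonneg _ _ t
  have hfs_loss : 0 ≤ 1 - agree fs c c' := sub_nonneg.2 (agree_le_one hfs hfs₁ c c')
  have hfallback : 0 ≤ (1 - collisionProb h c.1) * (1 - agree fs c c') :=
    mul_nonneg (sub_nonneg.2 (hh.collisionProb_le_one c.1)) hfs_loss
  have hcc' := hcross c c'
  have hc'c := hcross c' c
  by_cases hc : ∃ j, t < mass (h j) c.1 <;> by_cases hc' : ∃ j, t < mass (h j) c'.1
  · linarith [hh.one_sub_agree_thresholdRound_le_of_heavy hfs ht hc hc']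
  · push Not at hc'
    linarith [hh.one_le_sum_discrepancy_add_crossing ht' hc hc']
  · push Not at hc
    have := hh.one_le_sum_discrepancy_add_crossing ht' hc' hc
    simp only [discrepancy_comm _ c' c] at this
    linarith
  · push Not at hc hc'
    have hlight := hh.collisionProb_le_of_mass_le (by linarith) hc
    rw [agree_thresholdRound_of_light hc hc']
    nlinarith

end Constraints


section SymmetrizedMean

variable {G : ProjGame}

/-- A question to Bob together with the constraint on his answer. -/
abbrev Query (G : ProjGame) : Type := G.Q2 × (G.A → Option G.A)

/-- The mean over the symmetrized game: `c` and `c'` are drawn independently given `u`. -/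
noncomputable def symMean (G : ProjGame) (F : G.Query → G.Query → ℝ) : ℝ :=
  ∑ c, ∑ c', G.msymFull c.1 c'.1 c.2 c'.2 * F c c'

lemma wU_eq_sum (u : G.Q1) : G.wU u = ∑ c : G.Query, G.μ (u, c) := by
  rw [Fintype.sum_prod_type]
  rfl

lemma wU_nonneg (u : G.Q1) : 0 ≤ G.wU u := by
  rw [wU_eq_sum]
  exact sum_nonneg fun _ _ ↦ G.μ_nonneg _

lemma wV_nonneg (v : G.Q2) : 0 ≤ G.wV v :=
  sum_nonneg fun _ _ ↦ sum_nonneg fun _ _ ↦ G.μ_nonneg _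

lemma sum_wU (G : ProjGame) : ∑ u, G.wU u = 1 := by
  simp only [wU_eq_sum]
  rw [← Fintype.sum_prod_type, G.μ_sum]

lemma μ_mul_wU_div_wU (u : G.Q1) (c : G.Query) : G.μ (u, c) * G.wU u / G.wU u = G.μ (u, c) := by
  rcases (wU_nonneg u).eq_or_lt with hu | hu
  · have hle : G.μ (u, c) ≤ G.wU u := by
      rw [wU_eq_sum]
      exact single_le_sum (f := fun c ↦ G.μ (u, c)) (fun _ _ ↦ G.μ_nonneg _) (mem_univ c)
    simp [le_antisymm (hu ▸ hle) (G.μ_nonneg _)]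
  · exact mul_div_cancel_right₀ _ hu.ne'

lemma sum_wV_mul (g : G.Q2 → ℝ) :
    ∑ v, G.wV v * g v = ∑ u, ∑ c : G.Query, G.μ (u, c) * g c.1 := by
  simp only [wV, sum_mul, Fintype.sum_prod_type]
  exact sum_comm

lemma msymFull_nonneg (c c' : G.Query) : 0 ≤ G.msymFull c.1 c'.1 c.2 c'.2 :=
  sum_nonneg fun u _ ↦ div_nonneg (mul_nonneg (G.μ_nonneg _) (G.μ_nonneg _)) (wU_nonneg u)

lemma msymFull_comm (v v' : G.Q2) (π π' : G.A → Option G.A) :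
    G.msymFull v v' π π' = G.msymFull v' v π' π := by
  simp only [msymFull, mul_comm]

lemma symMean_eq_sum (F : G.Query → G.Query → ℝ) :
    G.symMean F = ∑ u, (∑ c, ∑ c', G.μ (u, c) * G.μ (u, c') * F c c') / G.wU u := by
  simp only [symMean, msymFull, sum_mul, sum_div, div_mul_eq_mul_div]
  exact (sum_congr rfl fun c _ ↦ sum_comm).trans sum_comm

lemma symMean_swap (F : G.Query → G.Query → ℝ) :
    G.symMean (fun c c' ↦ F c' c) = G.symMean F := by
  rw [symMean, sum_comm]
  exact sum_congr rfl fun c _ ↦ sum_congr rfl fun c' _ ↦ by rw [msymFull_comm]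

lemma symMean_mono {F F' : G.Query → G.Query → ℝ} (h : ∀ c c', F c c' ≤ F' c c') :
    G.symMean F ≤ G.symMean F' :=
  sum_le_sum fun c _ ↦ sum_le_sum fun c' _ ↦
    mul_le_mul_of_nonneg_left (h c c') (msymFull_nonneg c c')

lemma symMean_nonneg {F : G.Query → G.Query → ℝ} (h : ∀ c c', 0 ≤ F c c') : 0 ≤ G.symMean F :=
  sum_nonneg fun c _ ↦ sum_nonneg fun c' _ ↦ mul_nonneg (msymFull_nonneg c c') (h c c')

lemma symMean_add (F F' : G.Query → G.Query → ℝ) :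
    G.symMean (fun c c' ↦ F c c' + F' c c') = G.symMean F + G.symMean F' := by
  simp only [symMean, mul_add, sum_add_distrib]

lemma symMean_sub (F F' : G.Query → G.Query → ℝ) :
    G.symMean (fun c c' ↦ F c c' - F' c c') = G.symMean F - G.symMean F' := by
  simp only [symMean, mul_sub, sum_sub_distrib]

lemma symMean_const_mul (a : ℝ) (F : G.Query → G.Query → ℝ) :
    G.symMean (fun c c' ↦ a * F c c') = a * G.symMean F := by
  simp only [symMean, mul_sum, mul_left_comm a]

lemma symMean_sum {ι : Type*} [Fintype ι] (F : ι → G.Query → G.Query → ℝ) :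
    G.symMean (fun c c' ↦ ∑ i, F i c c') = ∑ i, G.symMean (F i) := by
  simp only [symMean, mul_sum]
  exact (sum_congr rfl fun c _ ↦ sum_comm).trans sum_comm

lemma symMean_left (g : G.Q2 → ℝ) : G.symMean (fun c _ ↦ g c.1) = ∑ v, G.wV v * g v := by
  rw [symMean_eq_sum, sum_wV_mul]
  refine sum_congr rfl fun u _ ↦ ?_
  rw [sum_div]
  refine sum_congr rfl fun c _ ↦ ?_
  rw [← sum_mul, ← mul_sum, ← wU_eq_sum, mul_div_right_comm, μ_mul_wU_div_wU]

lemma sum_wV (G : ProjGame) : ∑ v, G.wV v = 1 := by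
  have := sum_wV_mul (G := G) fun _ ↦ 1
  simpa only [mul_one, ← wU_eq_sum, sum_wU] using this

lemma symMean_one (G : ProjGame) : G.symMean (fun _ _ ↦ 1) = 1 := by
  simpa only [mul_one, sum_wV] using symMean_left (G := G) fun _ ↦ 1

end SymmetrizedMean

section CollisionValue

variable {G : ProjGame} {f : G.Q2 × G.A → ℝ}

lemma op_apply (f : G.Q2 × G.A → ℝ) (u : G.Q1) (α : G.A) :
    G.op f (u, α) = (∑ c : G.Query, G.μ (u, c) * push f c α) / G.wU u := by
  rw [Fintype.sum_prod_type]
  rfl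

lemma normUsq_op (f : G.Q2 × G.A → ℝ) : G.normUsq (G.op f) = G.symMean (agree f) := by
  rw [symMean_eq_sum, normUsq]
  refine sum_congr rfl fun u _ ↦ ?_
  have hcancel (x : ℝ) : G.wU u * (x / G.wU u) ^ 2 = x ^ 2 / G.wU u := by
    rcases eq_or_ne (G.wU u) 0 with hu | hu
    · simp [hu]
    · field_simp
  rw [mul_sum]
  simp only [op_apply, hcancel, agree, mul_sum]
  simp only [sq, sum_mul_sum, ← sum_div, mul_mul_mul_comm]
  congr 1
  exact sum_comm.trans (sum_congr rfl fun c _ ↦ sum_comm)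

lemma symMean_discrepancy (f : G.Q2 × G.A → ℝ) :
    G.symMean (discrepancy f) = G.Tnormsq f - G.normUsq (G.op f) := by
  have hmass : G.symMean (fun c _ ↦ mass f c.1 ^ 2) = G.Tnormsq f :=
    symMean_left fun v ↦ mass f v ^ 2
  have hswap : G.symMean (fun _ c ↦ mass f c.1 ^ 2) = G.Tnormsq f := by rw [← hmass, symMean_swap]
  calc G.symMean (discrepancy f)
      = G.symMean fun c c' ↦ 2⁻¹ * (mass f c.1 ^ 2 + mass f c'.1 ^ 2) - agree f c c' := by
        congr 1
        funext c c'
        rw [discrepancy, div_eq_inv_mul]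
    _ = G.Tnormsq f - G.normUsq (G.op f) := by
        rw [symMean_sub, symMean_const_mul, symMean_add, hmass, hswap, normUsq_op]
        ring

lemma symMean_sum_discrepancy {J : Type*} [Fintype J] (h : J → G.Q2 × G.A → ℝ) :
    G.symMean (fun c c' ↦ ∑ j, discrepancy (h j) c c') =
      ∑ v, G.wV v * collisionProb h v - ∑ j, G.normUsq (G.op (h j)) := by
  simp only [symMean_sum, symMean_discrepancy, sum_sub_distrib, collisionProb, mul_sum, Tnormsq]
  rw [sum_comm]
  rfl

lemma op_nonneg (hf : 0 ≤ f) : 0 ≤ G.op f := fun ⟨u, α⟩ ↦ by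
  rw [op_apply]
  exact div_nonneg (sum_nonneg fun c _ ↦ mul_nonneg (G.μ_nonneg _) (push_nonneg hf c α))
    (wU_nonneg u)

lemma IsBob.sum_op_le_one (hf : G.IsBob f) (u : G.Q1) : ∑ α, G.op f (u, α) ≤ 1 := by
  simp only [op_apply, ← sum_div]
  refine (div_le_div_of_nonneg_right ?_ (wU_nonneg u)).trans (div_self_le_one (G.wU u))
  rw [sum_comm, wU_eq_sum]
  refine sum_le_sum fun c _ ↦ ?_
  rw [← mul_sum]
  exact mul_le_of_le_one_right (G.μ_nonneg _) ((sum_push_le_mass hf.1 c).trans_eq (hf.2 c.1))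

lemma isCompact_setOf_isBob (G : ProjGame) : IsCompact {f | G.IsBob f} := by
  refine (isCompact_Icc (a := (0 : G.Q2 × G.A → ℝ)) (b := 1)).of_isClosed_subset ?_ ?_
  · simp only [IsBob, Set.ofPred_and, Set.ofPred_forall]
    refine .inter (isClosed_iInter fun p ↦ ?_) (isClosed_iInter fun v ↦ ?_)
    · exact isClosed_le continuous_const (continuous_apply p)
    · exact isClosed_eq (by fun_prop) continuous_const
  · exact fun f hf ↦ ⟨hf.1, fun p ↦
      (single_le_sum (f := fun β ↦ f (p.1, β)) (fun _ _ ↦ hf.1 _) (mem_univ p.2)).trans_eq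
        (hf.2 p.1)⟩

lemma nonempty_setOf_isBob (G : ProjGame) : {f | G.IsBob f}.Nonempty :=
  ⟨fun _ ↦ (Fintype.card G.A : ℝ)⁻¹, fun _ ↦ by positivity, fun _ ↦ by simp⟩

lemma continuous_normUsq_op (G : ProjGame) : Continuous fun f ↦ G.normUsq (G.op f) := by
  have hpush (c : G.Query) (α : G.A) : Continuous fun f : G.Q2 × G.A → ℝ ↦ push f c α :=
    continuous_finsetSum _ fun β _ ↦ by split_ifs <;> fun_prop
  simp only [normUsq_op, symMean, agree]
  fun_prop

lemma isGreatest_collVal (G : ProjGame) :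
    IsGreatest {x | ∃ f, G.IsBob f ∧ x = √(G.normUsq (G.op f))} G.collVal := by
  have himage : {x | ∃ f, G.IsBob f ∧ x = √(G.normUsq (G.op f))} =
      (fun f ↦ √(G.normUsq (G.op f))) '' {f | G.IsBob f} := by
    ext x
    simp only [Set.mem_ofPred_eq, Set.mem_image, eq_comm (a := x)]
  rw [collVal, himage]
  exact (G.isCompact_setOf_isBob.image G.continuous_normUsq_op.sqrt).isGreatest_sSup
    (G.nonempty_setOf_isBob.image _)

/-- The loss `1 - ‖G‖²` of the collision value. -/
noncomputable def collLoss (G : ProjGame) : ℝ := 1 - G.collVal ^ 2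

lemma normUsq_nonneg (g : G.Q1 × G.A → ℝ) : 0 ≤ G.normUsq g :=
  sum_nonneg fun u _ ↦ mul_nonneg (wU_nonneg u) (sum_nonneg fun _ _ ↦ sq_nonneg _)

lemma normUsq_le_one {g : G.Q1 × G.A → ℝ} (hg : 0 ≤ g) (hg₁ : ∀ u, ∑ α, g (u, α) ≤ 1) :
    G.normUsq g ≤ 1 := by
  rw [← G.sum_wU, normUsq]
  refine sum_le_sum fun u _ ↦ mul_le_of_le_one_right (wU_nonneg u) ?_
  simp only [sq]
  exact sum_mul_le_one (fun _ ↦ hg _) (fun _ ↦ hg _) (hg₁ u) (hg₁ u)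

lemma IsBob.normUsq_op_le (hf : G.IsBob f) : G.normUsq (G.op f) ≤ 1 - G.collLoss := by
  rw [collLoss, sub_sub_cancel]
  exact (Real.sqrt_le_iff.1 (G.isGreatest_collVal.2 ⟨f, hf, rfl⟩)).2

lemma exists_isBob_normUsq_op_eq (G : ProjGame) :
    ∃ f, G.IsBob f ∧ G.normUsq (G.op f) = 1 - G.collLoss := by
  obtain ⟨f, hf, hval⟩ := G.isGreatest_collVal.1
  exact ⟨f, hf, by rw [collLoss, sub_sub_cancel, hval, Real.sq_sqrt (normUsq_nonneg _)]⟩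

lemma collLoss_nonneg (G : ProjGame) : 0 ≤ G.collLoss := by
  obtain ⟨f, hf, hval⟩ := G.exists_isBob_normUsq_op_eq
  linarith [normUsq_le_one (op_nonneg hf.1) hf.sum_op_le_one]

lemma symMean_one_sub_agree (f : G.Q2 × G.A → ℝ) :
    G.symMean (fun c c' ↦ 1 - agree f c c') = 1 - G.normUsq (G.op f) := by
  rw [symMean_sub, symMean_one, normUsq_op]

lemma IsAlice.inn_op_le {g : G.Q1 × G.A → ℝ} (hg : G.IsAlice g) (hf : G.IsBob f) :
    G.inn g (G.op f) ≤ 1 - G.collLoss / 2 := by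
  have hyoung : 2 * G.inn g (G.op f) ≤ G.normUsq g + G.normUsq (G.op f) := by
    simp only [inn, normUsq, mul_sum, ← sum_add_distrib]
    refine sum_le_sum fun u _ ↦ sum_le_sum fun α _ ↦ ?_
    nlinarith [wU_nonneg u, two_mul_le_add_sq (g (u, α)) (G.op f (u, α))]
  linarith [normUsq_le_one hg.1 fun u ↦ (hg.2 u).le, hf.normUsq_op_le]

lemma exists_isAlice_ge {g : G.Q1 × G.A → ℝ} (hg : 0 ≤ g) (hg₁ : ∀ u, ∑ α, g (u, α) ≤ 1) :
    ∃ g', G.IsAlice g' ∧ g ≤ g' := by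
  have hslack (p : G.Q1 × G.A) : 0 ≤ (1 - ∑ α, g (p.1, α)) / Fintype.card G.A :=
    div_nonneg (sub_nonneg.2 (hg₁ p.1)) (Nat.cast_nonneg _)
  refine ⟨fun p ↦ g p + (1 - ∑ α, g (p.1, α)) / Fintype.card G.A,
    ⟨fun p ↦ add_nonneg (hg p) (hslack p), fun u ↦ ?_⟩, fun p ↦ le_add_of_nonneg_right (hslack p)⟩
  dsimp only
  rw [sum_add_distrib, sum_const, card_univ, nsmul_eq_mul,
    mul_div_cancel₀ _ (Nat.cast_ne_zero.2 Fintype.card_ne_zero), add_sub_cancel]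

lemma exists_isBob_isAlice_le_inn (G : ProjGame) :
    ∃ f g, G.IsBob f ∧ G.IsAlice g ∧ 1 - G.collLoss ≤ G.inn g (G.op f) := by
  obtain ⟨f, hf, hval⟩ := G.exists_isBob_normUsq_op_eq
  obtain ⟨g, hg, hle⟩ := exists_isAlice_ge (op_nonneg hf.1) hf.sum_op_le_one
  refine ⟨f, g, hf, hg, hval.symm.trans_le ?_⟩
  refine sum_le_sum fun u _ ↦ mul_le_mul_of_nonneg_left (sum_le_sum fun α _ ↦ ?_) (wU_nonneg u)
  rw [sq]
  exact mul_le_mul_of_nonneg_right (hle _) (op_nonneg hf.1 _)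

lemma one_sub_val_le_collLoss (G : ProjGame) : 1 - G.val ≤ G.collLoss := by
  obtain ⟨f, g, hf, hg, hle⟩ := G.exists_isBob_isAlice_le_inn
  have : G.inn g (G.op f) ≤ G.val := by
    refine le_csSup ⟨1 - G.collLoss / 2, ?_⟩ ⟨f, g, hf, hg, rfl⟩
    rintro _ ⟨f, g, hf, hg, rfl⟩
    exact hg.inn_op_le hf
  linarith

lemma val_le (G : ProjGame) : G.val ≤ 1 - G.collLoss / 2 := by
  obtain ⟨f, g, hf, hg, -⟩ := G.exists_isBob_isAlice_le_inn
  refine csSup_le ⟨_, f, g, hf, hg, rfl⟩ ?_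
  rintro _ ⟨f, g, hf, hg, rfl⟩
  exact hg.inn_op_le hf

end CollisionValue

section Rounding

variable {G : ProjGame} {J : Type*} [Fintype J] {h : J → G.Q2 × G.A → ℝ}

lemma sum_wV_mul_one_sub (g : G.Q2 → ℝ) :
    ∑ v, G.wV v * (1 - g v) = 1 - ∑ v, G.wV v * g v := by
  simp only [mul_sub, mul_one, sum_sub_distrib, sum_wV]

lemma IsSubAssignment.sum_volume_crossing_le (hh : IsSubAssignment h) {κ : ℝ} (hκ : 0 < κ)
    (c c' : G.Query) :
    ∑ j, MeasureTheory.volume.real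
        (crossing (mass (h j) c'.1) (mass (h j) c.1) ∩ Set.Ico (2 / 3) (3 / 4)) ≤
      κ * ∑ j, discrepancy (h j) c c' + 4 / κ * (1 - collisionProb h c.1) := by
  calc _ ≤ ∑ j, (κ * discrepancy (h j) c c' +
          4 / κ * (mass (h j) c.1 - mass (h j) c.1 ^ 2)) := by
        refine sum_le_sum fun j _ ↦ (volume_crossing_le hκ (mass_nonneg (hh.1 j) _)
          (hh.mass_le_one j _)).trans ?_
        gcongr
        exact sq_mass_sub_mass_le_discrepancy (hh.1 j) c c'
    _ ≤ _ := by
        rw [sum_add_distrib, ← mul_sum, ← mul_sum]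
        gcongr
        exact hh.sum_mass_sub_sq_le c.1

lemma IsSubAssignment.exists_symMean_crossing_le (hh : IsSubAssignment h) {κ : ℝ} (hκ : 0 < κ) :
    ∃ t ∈ Set.Ico (2 / 3 : ℝ) (3 / 4),
      G.symMean (fun c c' ↦
          ∑ j, (crossing (mass (h j) c'.1) (mass (h j) c.1)).indicator 1 t) ≤
        12 * κ * G.symMean (fun c c' ↦ ∑ j, discrepancy (h j) c c') +
          48 / κ * (1 - ∑ v, G.wV v * collisionProb h v) := by
  obtain ⟨t, ht, hle⟩ := exists_sum_mul_indicator_le MeasureTheory.volume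
    (S := Set.Ico (2 / 3 : ℝ) (3 / 4)) (by norm_num) (by norm_num)
    (fun k : G.Query × G.Query × J ↦ G.msymFull k.1.1 k.2.1.1 k.1.2 k.2.1.2)
    (fun k ↦ measurableSet_crossing (mass (h k.2.2) k.2.1.1) (mass (h k.2.2) k.1.1))
  have hlength : (MeasureTheory.volume.real (Set.Ico (2 / 3 : ℝ) (3 / 4)))⁻¹ = 12 := by
    rw [Real.volume_real_Ico_of_le] <;> norm_num
  simp only [hlength, Fintype.sum_prod_type (α₁ := G.Query), ← mul_sum] at hle
  refine ⟨t, ht, hle.trans ?_⟩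
  have hmean := symMean_mono (hh.sum_volume_crossing_le hκ)
  rw [symMean_add, symMean_const_mul, symMean_const_mul,
    symMean_left fun v ↦ 1 - collisionProb h v, sum_wV_mul_one_sub] at hmean
  calc _ ≤ 12 * (κ * G.symMean (fun c c' ↦ ∑ j, discrepancy (h j) c c') +
        4 / κ * (1 - ∑ v, G.wV v * collisionProb h v)) :=
        mul_le_mul_of_nonneg_left hmean (by norm_num)
    _ = _ := by ring

lemma IsBob.collLoss_le_symMean {f : G.Q2 × G.A → ℝ} (hf : G.IsBob f) :
    G.collLoss ≤ G.symMean fun c c' ↦ 1 - agree f c c' := by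
  linarith [symMean_one_sub_agree f, hf.normUsq_op_le]

lemma IsSubAssignment.collLoss_le (hh : IsSubAssignment h) {fs : G.Q2 × G.A → ℝ}
    (hfs : G.IsBob fs) {κ : ℝ} (hκ : 0 < κ) :
    G.collLoss ≤
      (288 + 24 * κ) * G.symMean (fun c c' ↦ ∑ j, discrepancy (h j) c c') +
        96 / κ * (1 - ∑ v, G.wV v * collisionProb h v) +
        4 * G.symMean (fun c c' ↦ (1 - collisionProb h c.1) * (1 - agree fs c c')) := by
  obtain ⟨t, ht, hcross⟩ := hh.exists_symMean_crossing_le hκ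
  have hround : G.IsBob (thresholdRound h fs t) :=
    ⟨thresholdRound_nonneg hh.1 hfs.1, fun v ↦ mass_thresholdRound (by linarith [ht.1]) (hfs.2 v)⟩
  have hmean := hround.collLoss_le_symMean.trans <|
    symMean_mono (hh.one_sub_agree_thresholdRound_le hfs.1 hfs.2 ht.1 ht.2)
  rw [symMean_add, symMean_add, symMean_add, symMean_const_mul, symMean_const_mul,
    symMean_swap fun c c' ↦
      ∑ j, (crossing (mass (h j) c'.1) (mass (h j) c.1)).indicator 1 t] at hmean
  calc G.collLoss ≤ _ := hmean
    _ ≤ 288 * G.symMean (fun c c' ↦ ∑ j, discrepancy (h j) c c') +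
          2 * (12 * κ * G.symMean (fun c c' ↦ ∑ j, discrepancy (h j) c c') +
            48 / κ * (1 - ∑ v, G.wV v * collisionProb h v)) + _ := by
        rw [two_mul]
        gcongr
    _ = _ := by ring

end Rounding

section Tensor

variable {G H : ProjGame} {f : (G.Q2 × H.Q2) × (G.A × H.A) → ℝ}

/-- The query of `G ⊗ H` made up of a query of `G` and one of `H`. -/
def tensorQuery (c : G.Query) (d : H.Query) : (G.tensor H).Query :=
  ((c.1, d.1), tensorC c.2 d.2)

/-- The weights on answers in `H`, the question and answer in `G` being fixed to `p`. -/
def slice (f : (G.Q2 × H.Q2) × (G.A × H.A) → ℝ) (p : G.Q2 × G.A) : H.Q2 × H.A → ℝ :=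
  fun q ↦ f ((p.1, q.1), (p.2, q.2))

/-- Bob's assignment for `H` when his question in `G` is fixed to `v` and his answer in `G` is
discarded. -/
def marginal (f : (G.Q2 × H.Q2) × (G.A × H.A) → ℝ) (v : G.Q2) : H.Q2 × H.A → ℝ :=
  fun q ↦ ∑ β, slice f (v, β) q

/-- Given Alice's question `u` in `H`, her answers `α` index a family of strategies for `G`: Bob's
weights restricted to the event that his answer in `H` projects to `α`. -/
noncomputable def residual (f : (G.Q2 × H.Q2) × (G.A × H.A) → ℝ) (u : H.Q1) (α : H.A) :
    G.Q2 × G.A → ℝ :=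
  fun p ↦ H.op (slice f p) (u, α)

lemma sum_μ_tensor (u : G.Q1) (u' : H.Q1) (F : (G.tensor H).Query → ℝ) :
    ∑ c, (G.tensor H).μ ((u, u'), c) * F c =
      ∑ c : G.Query, ∑ d : H.Query, G.μ (u, c) * H.μ (u', d) * F (tensorQuery c d) := by
  have hite (y : (G.Q1 × G.Query) × (H.Q1 × H.Query)) :
      ∑ c, (if ((y.1.1, y.2.1), tensorQuery y.1.2 y.2.2) = ((u, u'), c)
        then G.μ y.1 * H.μ y.2 else 0) * F c =
      if y.1.1 = u ∧ y.2.1 = u' then G.μ y.1 * H.μ y.2 * F (tensorQuery y.1.2 y.2.2) else 0 := by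
    split_ifs with hy
    · simp [hy]
    · simp [hy]
  calc ∑ c, (G.tensor H).μ ((u, u'), c) * F c
      = ∑ c, ∑ y : (G.Q1 × G.Query) × (H.Q1 × H.Query),
          (if ((y.1.1, y.2.1), tensorQuery y.1.2 y.2.2) = ((u, u'), c)
            then G.μ y.1 * H.μ y.2 else 0) * F c := by
        simp only [← sum_mul]
        rfl
    _ = ∑ y : (G.Q1 × G.Query) × (H.Q1 × H.Query), if y.1.1 = u ∧ y.2.1 = u'
          then G.μ y.1 * H.μ y.2 * F (tensorQuery y.1.2 y.2.2) else 0 := by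
        rw [sum_comm]
        exact sum_congr rfl fun y _ ↦ hite y
    _ = _ := by
        simp only [Fintype.sum_prod_type (α₁ := G.Q1 × G.Query),
          Fintype.sum_prod_type (α₁ := G.Q1), Fintype.sum_prod_type (α₁ := H.Q1), ite_and,
          sum_ite_irrel, sum_const_zero, sum_ite_eq', mem_univ, if_true]

lemma wU_tensor (u : G.Q1) (u' : H.Q1) : (G.tensor H).wU (u, u') = G.wU u * H.wU u' := by
  have := sum_μ_tensor u u' fun _ ↦ 1
  simp only [mul_one, ← sum_mul_sum, ← wU_eq_sum] at this
  exact (wU_eq_sum (G := G.tensor H) _).trans this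

lemma tensorC_eq_some_iff {A A' : Type} {π : A → Option A} {π' : A' → Option A'} {b : A × A'}
    {a : A × A'} : tensorC π π' b = some a ↔ π b.1 = some a.1 ∧ π' b.2 = some a.2 := by
  simp [tensorC, Option.bind_eq_some_iff, Prod.ext_iff]

lemma push_tensorQuery (c : G.Query) (d : H.Query) (α : G.A) (α' : H.A) :
    push f (tensorQuery c d) (α, α') = push (fun p ↦ push (slice f p) d α') c α := by
  calc push f (tensorQuery c d) (α, α')
      = ∑ β, ∑ β', if tensorC c.2 d.2 (β, β') = some (α, α')
          then f ((c.1, d.1), (β, β')) else 0 := Fintype.sum_prod_type _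
    _ = _ := by
        simp only [tensorC_eq_some_iff, ite_and, push, slice]
        refine sum_congr rfl fun β _ ↦ ?_
        split_ifs <;> simp

lemma op_tensor (u : G.Q1) (u' : H.Q1) (α : G.A) (α' : H.A) :
    (G.tensor H).op f ((u, u'), (α, α')) = G.op (residual f u' α') (u, α) := by
  have hres : residual f u' α' =
      fun p ↦ (∑ d : H.Query, H.μ (u', d) * push (slice f p) d α') / H.wU u' :=
    funext fun p ↦ op_apply ..
  calc (G.tensor H).op f ((u, u'), (α, α'))
      = (∑ c : (G.tensor H).Query, (G.tensor H).μ ((u, u'), c) * push f c (α, α')) /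
          (G.tensor H).wU (u, u') := op_apply ..
    _ = (∑ c : G.Query, ∑ d : H.Query, G.μ (u, c) * H.μ (u', d) *
          push (fun p ↦ push (slice f p) d α') c α) / (G.wU u * H.wU u') := by
        rw [sum_μ_tensor u u' fun c ↦ push f c (α, α'), wU_tensor]
        simp only [push_tensorQuery]
    _ = G.op (residual f u' α') (u, α) := by
        rw [op_apply, hres]
        simp only [push_sum_mul_div, mul_div_assoc', ← sum_div, div_div, mul_sum, mul_assoc,
          mul_comm (H.wU u')]

lemma normUsq_op_tensor (f : (G.Q2 × H.Q2) × (G.A × H.A) → ℝ) :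
    (G.tensor H).normUsq ((G.tensor H).op f) =
      ∑ u, H.wU u * ∑ α, G.normUsq (G.op (residual f u α)) := by
  calc (G.tensor H).normUsq ((G.tensor H).op f)
      = ∑ p : G.Q1 × H.Q1, (G.tensor H).wU p *
          ∑ a : G.A × H.A, (G.tensor H).op f (p, a) ^ 2 := rfl
    _ = ∑ u, ∑ u', G.wU u * H.wU u' * ∑ α, ∑ α', G.op (residual f u' α') (u, α) ^ 2 := by
        simp only [Fintype.sum_prod_type, wU_tensor, op_tensor]
    _ = _ := by
        rw [sum_comm]
        refine sum_congr rfl fun u' _ ↦ ?_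
        simp only [normUsq, mul_sum, mul_assoc, mul_left_comm (H.wU u')]
        exact (sum_congr rfl fun u _ ↦ sum_comm).trans sum_comm

lemma mass_residual (u : H.Q1) (α : H.A) (v : G.Q2) :
    mass (residual f u α) v = H.op (marginal f v) (u, α) := by
  have hpush (d : H.Query) : ∑ β, push (slice f (v, β)) d α = push (marginal f v) d α := by
    simp only [push, marginal]
    rw [sum_comm]
    refine sum_congr rfl fun β _ ↦ ?_
    split_ifs <;> simp
  simp only [mass, residual, op_apply]
  rw [← sum_div, sum_comm]
  simp only [← mul_sum, hpush]

lemma sum_wU_mul_collisionProb_residual (v : G.Q2) :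
    ∑ u, H.wU u * collisionProb (residual f u) v = H.normUsq (H.op (marginal f v)) := by
  simp only [collisionProb, mass_residual, normUsq]

lemma isBob_marginal (hf : (G.tensor H).IsBob f) (v : G.Q2) : H.IsBob (marginal f v) := by
  refine ⟨fun q ↦ sum_nonneg fun β _ ↦ hf.1 _, fun v' ↦ ?_⟩
  calc ∑ β', marginal f v (v', β') = ∑ β, ∑ β', f ((v, v'), (β, β')) := sum_comm
    _ = 1 := (Fintype.sum_prod_type _).symm.trans (hf.2 (v, v'))

lemma isSubAssignment_residual (hf : (G.tensor H).IsBob f) (u : H.Q1) :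
    IsSubAssignment (residual f u) := by
  refine ⟨fun α p ↦ op_nonneg (fun q ↦ hf.1 _) _, fun v ↦ ?_⟩
  simp only [mass_residual]
  exact (isBob_marginal hf v).sum_op_le_one u

end Tensor

section ParallelRepetition

variable {G H : ProjGame} {f : (G.Q2 × H.Q2) × (G.A × H.A) → ℝ} {fs : G.Q2 × G.A → ℝ} {κ : ℝ}

lemma sum_wU_mul_sum_discrepancy_residual (f : (G.Q2 × H.Q2) × (G.A × H.A) → ℝ) :
    ∑ u, H.wU u * G.symMean (fun c c' ↦ ∑ α, discrepancy (residual f u α) c c') =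
      ∑ v, G.wV v * H.normUsq (H.op (marginal f v)) -
        (G.tensor H).normUsq ((G.tensor H).op f) := by
  simp only [symMean_sum_discrepancy, mul_sub, sum_sub_distrib, normUsq_op_tensor]
  congr 1
  simp only [← sum_wU_mul_collisionProb_residual, mul_sum, mul_left_comm (H.wU _)]
  exact sum_comm

lemma sum_wU_mul_one_sub_collisionProb_residual (v : G.Q2) :
    ∑ u, H.wU u * (1 - collisionProb (residual f u) v) =
      1 - H.normUsq (H.op (marginal f v)) := by
  simp only [mul_sub, mul_one, sum_sub_distrib, sum_wU, sum_wU_mul_collisionProb_residual]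

lemma collLoss_le_of_isBob_tensor (hf : (G.tensor H).IsBob f) (hfs : G.IsBob fs) (hκ : 0 < κ) :
    G.collLoss ≤
      (288 + 24 * κ) * (∑ v, G.wV v * H.normUsq (H.op (marginal f v)) -
        (G.tensor H).normUsq ((G.tensor H).op f)) +
      96 / κ * (1 - ∑ v, G.wV v * H.normUsq (H.op (marginal f v))) +
      4 * G.symMean (fun c c' ↦
        (1 - H.normUsq (H.op (marginal f c.1))) * (1 - agree fs c c')) := by
  have hfallback : ∑ u, H.wU u * G.symMean (fun c c' ↦
        (1 - collisionProb (residual f u) c.1) * (1 - agree fs c c')) =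
      G.symMean (fun c c' ↦
        (1 - H.normUsq (H.op (marginal f c.1))) * (1 - agree fs c c')) := by
    simp only [← symMean_const_mul, ← symMean_sum, ← mul_assoc, ← sum_mul,
      sum_wU_mul_one_sub_collisionProb_residual]
  have hcollision : ∑ u, H.wU u * (1 - ∑ v, G.wV v * collisionProb (residual f u) v) =
      1 - ∑ v, G.wV v * H.normUsq (H.op (marginal f v)) := by
    simp only [← sum_wV_mul_one_sub, ← sum_wU_mul_one_sub_collisionProb_residual, mul_sum,
      mul_left_comm (H.wU _)]
    exact sum_comm
  calc G.collLoss = ∑ u, H.wU u * G.collLoss := by rw [← sum_mul, sum_wU, one_mul]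
    _ ≤ ∑ u, H.wU u * _ := sum_le_sum fun u _ ↦
        mul_le_mul_of_nonneg_left ((isSubAssignment_residual hf u).collLoss_le hfs hκ)
          (wU_nonneg u)
    _ = _ := by
        rw [← hfallback, ← hcollision, ← sum_wU_mul_sum_discrepancy_residual]
        simp only [mul_add, sum_add_distrib, mul_sum, mul_left_comm (H.wU _)]

lemma symMean_one_sub_mul_le {M : G.Q2 → ℝ} {δ : ℝ} (hM : ∀ v, M v ≤ 1 - δ) (hfs : G.IsBob fs) :
    G.symMean (fun c c' ↦ (1 - M c.1) * (1 - agree fs c c')) ≤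
      δ * (1 - G.normUsq (G.op fs)) + (1 - δ - ∑ v, G.wV v * M v) := by
  have hpoint (c c' : G.Query) : (1 - M c.1) * (1 - agree fs c c') ≤
      δ * (1 - agree fs c c') + (1 - (δ + M c.1)) := by
    nlinarith [hM c.1, agree_nonneg hfs.1 c c']
  refine (symMean_mono hpoint).trans_eq ?_
  rw [symMean_add, symMean_const_mul, symMean_one_sub_agree,
    symMean_left fun v ↦ 1 - (δ + M v), sum_wV_mul_one_sub]
  simp only [mul_add, sum_add_distrib, ← sum_mul, sum_wV, one_mul]
  ring

lemma normUsq_op_tensor_le (hf : (G.tensor H).IsBob f) :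
    (G.tensor H).normUsq ((G.tensor H).op f) ≤
      ∑ v, G.wV v * H.normUsq (H.op (marginal f v)) := by
  rw [← sub_nonneg, ← sum_wU_mul_sum_discrepancy_residual]
  exact sum_nonneg fun u _ ↦ mul_nonneg (wU_nonneg u) <| symMean_nonneg fun c c' ↦
    sum_nonneg fun α _ ↦ discrepancy_nonneg ((isSubAssignment_residual hf u).1 α) c c'

lemma sum_wV_mul_normUsq_op_marginal_le (hf : (G.tensor H).IsBob f) :
    ∑ v, G.wV v * H.normUsq (H.op (marginal f v)) ≤ 1 - H.collLoss := by
  calc ∑ v, G.wV v * H.normUsq (H.op (marginal f v)) ≤ ∑ v, G.wV v * (1 - H.collLoss) :=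
        sum_le_sum fun v _ ↦
          mul_le_mul_of_nonneg_left (isBob_marginal hf v).normUsq_op_le (wV_nonneg v)
    _ = 1 - H.collLoss := by rw [← sum_mul, sum_wV, one_mul]

lemma collLoss_le_collLoss_tensor (G H : ProjGame) : H.collLoss ≤ (G.tensor H).collLoss := by
  obtain ⟨f, hf, hval⟩ := (G.tensor H).exists_isBob_normUsq_op_eq
  linarith [normUsq_op_tensor_le hf, sum_wV_mul_normUsq_op_marginal_le hf]

lemma collLoss_le_of_le_collLoss {δ : ℝ} (hδ : δ ≤ 1 / 8) (hH : δ ≤ H.collLoss) (hκ : 0 < κ) :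
    G.collLoss ≤ (584 + 48 * κ) * ((G.tensor H).collLoss - δ) +
      192 / κ * (G.tensor H).collLoss := by
  obtain ⟨f, hf, hval⟩ := (G.tensor H).exists_isBob_normUsq_op_eq
  obtain ⟨fs, hfs, hfs_val⟩ := G.exists_isBob_normUsq_op_eq
  have hround := collLoss_le_of_isBob_tensor hf hfs hκ
  have hfallback := symMean_one_sub_mul_le (δ := δ)
    (M := fun v ↦ H.normUsq (H.op (marginal f v)))
    (fun v ↦ by linarith [(isBob_marginal hf v).normUsq_op_le]) hfs
  have hlower := normUsq_op_tensor_le hf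
  have hupper := sum_wV_mul_normUsq_op_marginal_le hf
  set E := ∑ v, G.wV v * H.normUsq (H.op (marginal f v))
  rw [hval] at hround hlower
  rw [hfs_val, sub_sub_cancel] at hfallback
  have hdiscrepancy : (288 + 24 * κ) * (E - (1 - (G.tensor H).collLoss)) ≤
      (288 + 24 * κ) * ((G.tensor H).collLoss - δ) :=
    mul_le_mul_of_nonneg_left (by linarith) (by positivity)
  have hcollision : 96 / κ * (1 - E) ≤ 96 / κ * (G.tensor H).collLoss :=
    mul_le_mul_of_nonneg_left (by linarith) (by positivity)
  have hsmall : δ * G.collLoss ≤ G.collLoss / 8 := by nlinarith [G.collLoss_nonneg]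
  have hhalf : 192 / κ * (G.tensor H).collLoss = 2 * (96 / κ * (G.tensor H).collLoss) := by ring
  linarith

lemma sq_div_le_mul_of_forall_le {e δ τ : ℝ} (he : 0 ≤ e) (hτ : 0 ≤ τ) (hτδ : τ ≤ δ)
    (h : ∀ κ > 0, e ≤ (584 + 48 * κ) * τ + 192 / κ * δ) : (e / 1000) ^ 2 ≤ δ * τ := by
  have hlinear : e ≤ 776 * δ := by linarith [h 2 two_pos]
  rcases he.eq_or_lt with rfl | he
  · simpa using mul_nonneg (hτ.trans hτδ) hτ
  have hδ : 0 < δ := by linarith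
  -- The choice of `κ` makes the last term equal to `e / 2`.
  have hκ := h (384 * δ / e) (by positivity)
  have hquadratic : e ^ 2 ≤ 1168 * (e * τ) + 36864 * (δ * τ) := by
    field_simp at hκ
    linarith
  nlinarith [mul_le_mul_of_nonneg_right hlinear hτ, mul_nonneg hδ.le hτ]

lemma add_sq_le_sq_collLoss_tensor {δ : ℝ} (hδ₀ : 0 ≤ δ) (hδ : δ ≤ 1 / 8)
    (hH : δ ≤ H.collLoss) : δ ^ 2 + (G.collLoss / 1000) ^ 2 ≤ (G.tensor H).collLoss ^ 2 := by
  have hle : δ ≤ (G.tensor H).collLoss := hH.trans (collLoss_le_collLoss_tensor G H)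
  have := sq_div_le_mul_of_forall_le G.collLoss_nonneg (sub_nonneg.2 hle) (sub_le_self _ hδ₀)
    fun κ hκ ↦ collLoss_le_of_le_collLoss hδ hH hκ
  nlinarith

lemma sq_min_sqrt_add_one_le {a b x : ℝ} (ha : 0 ≤ a) (hb : 0 ≤ b) (hx : 0 ≤ x) :
    min a (√(x + 1) * b) ^ 2 ≤ min a (√x * b) ^ 2 + b ^ 2 := by
  have hmin : 0 ≤ min a (√(x + 1) * b) := le_min ha (by positivity)
  rcases le_total a (√x * b) with hab | hab
  · rw [min_eq_left hab]
    exact (pow_le_pow_left₀ hmin (min_le_left _ _) 2).trans (le_add_of_nonneg_right (sq_nonneg b))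
  · rw [min_eq_right hab]
    calc min a (√(x + 1) * b) ^ 2 ≤ (√(x + 1) * b) ^ 2 :=
          pow_le_pow_left₀ hmin (min_le_right _ _) 2
      _ = (√x * b) ^ 2 + b ^ 2 := by
          rw [mul_pow, mul_pow, Real.sq_sqrt (by positivity), Real.sq_sqrt hx]
          ring

lemma min_sqrt_mul_collLoss_le (G : ProjGame) (n : ℕ) :
    min (1 / 8) (√(n + 1) * (G.collLoss / 1000)) ≤ (G.iterTensor n).collLoss := by
  have hG := G.collLoss_nonneg
  induction n with
  | zero =>
    refine (min_le_right _ _).trans ?_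
    simp only [Nat.cast_zero, zero_add, Real.sqrt_one, one_mul, iterTensor]
    linarith
  | succ n ih =>
    have hδ₀ (x : ℝ) : 0 ≤ min (1 / 8) (√x * (G.collLoss / 1000)) :=
      le_min (by norm_num) (by positivity)
    refine (sq_le_sq₀ (hδ₀ _) (collLoss_nonneg _)).1 ?_
    push_cast
    exact (sq_min_sqrt_add_one_le (by norm_num) (by positivity) (by positivity)).trans
      (add_sq_le_sq_collLoss_tensor (hδ₀ _) (min_le_left _ _) ih)

end ParallelRepetition

end ProjGame

/-- **Few repetitions.** There are universal constants `c, C > 0` such that for every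
projection game `G` with `val(G) ≤ 1 - ε` (`0 < ε < 1`) and every positive `k ≤ c/ε²`,
`val(G^{⊗k}) ≤ 1 - C·√k·ε`. -/
theorem few_repetitions :
    ∃ c : ℝ, 0 < c ∧ ∃ C : ℝ, 0 < C ∧
      ∀ (G : ProjGame) (ε : ℝ), 0 < ε → ε < 1 → G.val ≤ 1 - ε →
        ∀ k : ℕ, 0 < k → (k : ℝ) ≤ c / ε ^ 2 →
          (G.iterTensor (k - 1)).val ≤ 1 - C * Real.sqrt k * ε := by
  refine ⟨1, one_pos, 1 / 2000, by norm_num, fun G ε hε _ hval k hk hkε ↦ ?_⟩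
  obtain ⟨n, rfl⟩ := Nat.exists_eq_add_one.2 hk
  have hloss : ε ≤ G.collLoss := by linarith [G.one_sub_val_le_collLoss]
  have hsqrt : √(n + 1 : ℕ) * ε ≤ 1 := by
    rw [← le_div_iff₀ hε]
    refine Real.sqrt_le_iff.2 ⟨by positivity, ?_⟩
    simpa only [div_pow, one_pow] using hkε
  have hmin : √(n + 1 : ℕ) * ε / 1000 ≤ min (1 / 8) (√(n + 1) * (G.collLoss / 1000)) := by
    rw [le_min_iff, mul_div_assoc]
    refine ⟨by linarith, ?_⟩
    push_cast
    gcongr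
  rw [Nat.add_sub_cancel]
  linarith [hmin.trans (G.min_sqrt_mul_collLoss_le n), (G.iterTensor n).val_le]
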